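/- arXiv:2507.10285 — 8 statements merged into one kernel-verified Lean document; each statement's English description precedes it below -/
import Mathlib

section
/- Let $N, n \ge 1$, let $H, K$ be complex $N \times N$ matrices, let $F$ be a complex $n \times n$ matrix, let $r \in \mathbb{C}^n$ be a vector and $l \in \mathbb{C}^n$ a covector such that the moment conditions $l^{\top} F^k r = 1$ hold for every integer $k \ge 0$. Set $A = -iH + K$ and let $\widetilde{A} = -i (I_n \otimes H) + F \otimes K$ (Kronecker products, with $I_n$ the $n \times n$ identity). Then for every $t \in \mathbb{R}$ and all indices $a, b \in \{1,\dots,N\}$, $\sum_{i=1}^{n} \sum_{j=1}^{n} l_i \, [\exp(t \widetilde{A})]_{(i,a),(j,b)} \, r_j = [\exp(t A)]_{a,b}$; that is, contracting the dilated matrix exponential with $l$ on the left and $r$ on the right in the ancilla factor reproduces the non-unitary propagator $e^{tA}$ exactly. -/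
open Matrix
open scoped Kronecker

/-- Contraction of the ancilla factor, at a fixed pair of system indices. -/
noncomputable def ctr {N n : ℕ} (l r : Fin n → ℂ) (a b : Fin N) :
    Matrix (Fin n × Fin N) (Fin n × Fin N) ℂ →ₗ[ℂ] ℂ where
  toFun X := ∑ i : Fin n, ∑ j : Fin n, l i * X (i, a) (j, b) * r j
  map_add' X Y := by
    simp only [Matrix.add_apply, mul_add, add_mul, Finset.sum_add_distrib]
  map_smul' c X := by
    simp only [Matrix.smul_apply, smul_eq_mul, RingHom.id_apply, Finset.mul_sum]
    refine Finset.sum_congr rfl fun i _ => Finset.sum_congr rfl fun j _ => ?_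
    ring

theorem ctr_kron {N n : ℕ} (l r : Fin n → ℂ) (a b : Fin N)
    (G : Matrix (Fin n) (Fin n) ℂ) (M : Matrix (Fin N) (Fin N) ℂ) :
    ctr l r a b (G ⊗ₖ M) = (l ⬝ᵥ G.mulVec r) * M a b := by
  simp only [ctr, LinearMap.coe_mk, AddHom.coe_mk, Matrix.kroneckerMap_apply, dotProduct,
    Matrix.mulVec, Finset.mul_sum, Finset.sum_mul]
  refine Finset.sum_congr rfl fun i _ => Finset.sum_congr rfl fun j _ => ?_
  ring

theorem ctr_pow {N n : ℕ} (l r : Fin n → ℂ) (a b : Fin N)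
    (H K : Matrix (Fin N) (Fin N) ℂ) (F : Matrix (Fin n) (Fin n) ℂ)
    (hmom : ∀ k : ℕ, l ⬝ᵥ (F ^ k).mulVec r = 1) (m : ℕ) :
    ∀ (k : ℕ) (M : Matrix (Fin N) (Fin N) ℂ),
      ctr l r a b (((-Complex.I) • ((1 : Matrix (Fin n) (Fin n) ℂ) ⊗ₖ H) + F ⊗ₖ K) ^ m
        * ((F ^ k) ⊗ₖ M)) = (((-Complex.I) • H + K) ^ m * M) a b := by
  induction m with
  | zero => intro k M; simp [ctr_kron, hmom]
  | succ m ih =>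
    intro k M
    have h : ((-Complex.I) • ((1 : Matrix (Fin n) (Fin n) ℂ) ⊗ₖ H) + F ⊗ₖ K) * ((F ^ k) ⊗ₖ M)
        = (-Complex.I) • ((F ^ k) ⊗ₖ (H * M)) + (F ^ (k + 1)) ⊗ₖ (K * M) := by
      rw [add_mul, smul_mul_assoc, ← Matrix.mul_kronecker_mul, ← Matrix.mul_kronecker_mul,
        one_mul, pow_succ']
    rw [pow_succ, mul_assoc, h, mul_add, map_add, mul_smul_comm, map_smul, ih, ih,
      pow_succ, mul_assoc, add_mul, mul_add, smul_mul_assoc, mul_smul_comm]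
    simp

open scoped Matrix.Norms.Operator in
theorem exp_matrix_hasSum {m : Type*} [Fintype m] [DecidableEq m] (X : Matrix m m ℂ) :
    HasSum (fun k : ℕ => ((k.factorial : ℂ)⁻¹) • X ^ k) (NormedSpace.exp X) :=
  NormedSpace.exp_series_hasSum_exp' (𝕂 := ℂ) X

/-- **Moment-fulfilling exact dilation, autonomous case.**
If `l^T F^k r = 1` for all `k ≥ 0`, then contracting the exponential of the dilated
generator `Ã = -i (Iₙ ⊗ H) + F ⊗ K` with `l` and `r` in the ancilla factor reproduces
the non-unitary propagator `e^{tA}` with `A = -iH + K`. -/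
theorem moment_fulfilling_exact_dilation_autonomous
    (N n : ℕ) (hN : 1 ≤ N) (hn : 1 ≤ n)
    (H K : Matrix (Fin N) (Fin N) ℂ) (F : Matrix (Fin n) (Fin n) ℂ)
    (r l : Fin n → ℂ)
    (hmom : ∀ k : ℕ, l ⬝ᵥ (F ^ k).mulVec r = 1)
    (A : Matrix (Fin N) (Fin N) ℂ) (hA : A = (-Complex.I) • H + K)
    (Atil : Matrix (Fin n × Fin N) (Fin n × Fin N) ℂ)
    (hAtil : Atil = (-Complex.I) • ((1 : Matrix (Fin n) (Fin n) ℂ) ⊗ₖ H) + F ⊗ₖ K) :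
    ∀ (t : ℝ) (a b : Fin N),
      ∑ i : Fin n, ∑ j : Fin n,
          l i * (NormedSpace.exp ((t : ℂ) • Atil)) (i, a) (j, b) * r j
        = (NormedSpace.exp ((t : ℂ) • A)) a b := by
  intro t a b
  subst hA hAtil
  have hc : Continuous (ctr (N := N) l r a b) := by
    change Continuous fun X : Matrix (Fin n × Fin N) (Fin n × Fin N) ℂ =>
      ∑ i : Fin n, ∑ j : Fin n, l i * X (i, a) (j, b) * r j
    fun_prop
  have h1 := (exp_matrix_hasSum ((t : ℂ) •
    ((-Complex.I) • ((1 : Matrix (Fin n) (Fin n) ℂ) ⊗ₖ H) + F ⊗ₖ K))).map (ctr l r a b) hc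
  have hc2 : Continuous (Matrix.entryAddMonoidHom ℂ a b) := by
    change Continuous fun X : Matrix (Fin N) (Fin N) ℂ => X a b
    fun_prop
  have h2 := (exp_matrix_hasSum ((t : ℂ) • ((-Complex.I) • H + K))).map
    (Matrix.entryAddMonoidHom ℂ a b) hc2
  refine HasSum.unique h1 ?_
  convert h2 using 1
  swap
  · rfl
  funext k
  have := ctr_pow l r a b H K F hmom k 0 1
  rw [pow_zero, Matrix.one_kronecker_one, mul_one, mul_one] at this
  simp only [Function.comp_apply, smul_pow, map_smul, this]
  simp
end

section
/- Let $N, n \ge 1$, let $H, K : \mathbb{R} \to \mathbb{C}^{N \times N}$ be continuous matrix-valued functions, let $F$ be a complex $n \times n$ matrix, and let $r \in \mathbb{C}^n$, $l \in \mathbb{C}^n$ satisfy the moment conditions $l^{\top} F^k r = 1$ for every integer $k \ge 0$. Suppose $X : \mathbb{R} \to \mathbb{C}^{N \times N}$ solves $X'(t) = (-iH(t) + K(t)) X(t)$ with $X(0) = I_N$, and $\Psi : \mathbb{R} \to \mathbb{C}^{nN \times nN}$ solves $\Psi'(t) = \big(-i (I_n \otimes H(t)) + F \otimes K(t)\big)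 \Psi(t)$ with $\Psi(0) = I_{nN}$ (derivatives in the sense of Fréchet derivatives of matrix-valued functions). Then for every $t \ge 0$ and all $a, b \in \{1,\dots,N\}$, $\sum_{i=1}^{n} \sum_{j=1}^{n} l_i \, \Psi(t)_{(i,a),(j,b)} \, r_j = X(t)_{a,b}$. -/
open Matrix
open scoped Kronecker

theorem lin_unique {ι : Type*} [Fintype ι] (A : ℝ → Matrix ι ι ℂ) (hA : Continuous A)
    (y : ℝ → ι → ℂ) (hy : ∀ t i, HasDerivAt (fun s => y s i) ((A t *ᵥ y t) i) t)
    (h0 : y 0 = 0) (t : ℝ) (ht : 0 ≤ t) : y t = 0 := by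
  have hy' : ∀ t, HasDerivAt y (A t *ᵥ y t) t := fun t => hasDerivAt_pi.2 (hy t)
  have hc : Continuous (fun t => ∑ i, ∑ j, ‖A t i j‖) := by
    refine continuous_finset_sum _ fun i _ => continuous_finset_sum _ fun j _ => ?_
    exact (hA.matrix_elem i j).norm
  obtain ⟨M, hM⟩ := (isCompact_Icc (a := (0:ℝ)) (b := t)).exists_bound_of_continuousOn
    hc.continuousOn
  refine eq_zero_of_abs_deriv_le_mul_abs_self_of_eq_zero_right (K := M) (f' := fun t => A t *ᵥ y t)
    (a := 0) (b := t) (fun s _ => (hy' s).continuousAt.continuousWithinAt)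
    (fun s _ => (hy' s).hasDerivWithinAt) h0 ?_ t ⟨ht, le_rfl⟩
  intro s hs
  have h1 : ‖A s *ᵥ y s‖ ≤ (∑ i, ∑ j, ‖A s i j‖) * ‖y s‖ := by
    refine (pi_norm_le_iff_of_nonneg (by positivity)).2 fun i => ?_
    calc ‖(A s *ᵥ y s) i‖ ≤ ∑ j, ‖A s i j * y s j‖ := norm_sum_le _ _
      _ ≤ ∑ j, ‖A s i j‖ * ‖y s‖ := by
          refine Finset.sum_le_sum fun j _ => ?_
          rw [norm_mul]
          exact mul_le_mul_of_nonneg_left (norm_le_pi_norm _ _) (norm_nonneg _)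
      _ = (∑ j, ‖A s i j‖) * ‖y s‖ := by rw [Finset.sum_mul]
      _ ≤ _ := by
          refine mul_le_mul_of_nonneg_right ?_ (norm_nonneg _)
          exact Finset.single_le_sum (f := fun i => ∑ j, ‖A s i j‖)
            (fun i _ => Finset.sum_nonneg fun j _ => norm_nonneg _) (Finset.mem_univ i)
  refine h1.trans (mul_le_mul_of_nonneg_right ?_ (norm_nonneg _))
  exact (le_abs_self _).trans (hM s ⟨hs.1, hs.2.le⟩)

theorem entry_deriv {α β γ δ : Type*} [Fintype β] [Fintype γ]
    (B : Matrix α β ℂ) (C : Matrix γ δ ℂ) (Y : ℝ → Matrix β γ ℂ) (Y' : Matrix β γ ℂ) (t : ℝ)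
    (h : ∀ i j, HasDerivAt (fun s => Y s i j) (Y' i j) t) (a : α) (d : δ) :
    HasDerivAt (fun s => (B * Y s * C) a d) ((B * Y' * C) a d) t := by
  simp only [Matrix.mul_apply]
  refine HasDerivAt.fun_sum fun j _ => HasDerivAt.mul_const ?_ _
  exact HasDerivAt.fun_sum fun i _ => (h i j).const_mul _

theorem exists_companion {n : ℕ} (F : Matrix (Fin n) (Fin n) ℂ) :
    ∃ G : Matrix (Fin n) (Fin n) ℂ, ∀ k : Fin n,
      F ^ ((k : ℕ) + 1) = ∑ j : Fin n, G k j • F ^ (j : ℕ) := by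
  refine ⟨fun k j => (Polynomial.X ^ ((k : ℕ) + 1) %ₘ F.charpoly).coeff j, fun k => ?_⟩
  have hn : 0 < n := k.pos
  haveI : Nonempty (Fin n) := ⟨k⟩
  conv_lhs => rw [Matrix.pow_eq_aeval_mod_charpoly]
  rw [Polynomial.aeval_eq_sum_range' (n := n), Finset.sum_range]
  have h := Polynomial.natDegree_modByMonic_lt (Polynomial.X ^ ((k : ℕ) + 1))
    F.charpoly_monic (by
      intro h1
      have := F.charpoly_natDegree_eq_dim
      rw [h1] at this
      simp at this
      omega)
  rwa [F.charpoly_natDegree_eq_dim, Fintype.card_fin] at h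

/-- **Moment-fulfilling exact dilation, time-dependent case.**
If `l^T F^k r = 1` for all `k ≥ 0`, and `X`, `Ψ` are the time-ordered propagators of the
original system `X' = (-iH(t)+K(t))X` and of the dilated system
`Ψ' = (-i(Iₙ ⊗ H(t)) + F ⊗ K(t))Ψ` respectively (with identity initial data), then
contracting `Ψ(t)` with `l` and `r` in the ancilla factor reproduces `X(t)`. -/
theorem moment_fulfilling_exact_dilation_time_dependent
    (N n : ℕ) (hN : 1 ≤ N) (hn : 1 ≤ n)
    (H K : ℝ → Matrix (Fin N) (Fin N) ℂ)
    (hHcont : Continuous H) (hKcont : Continuous K)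
    (F : Matrix (Fin n) (Fin n) ℂ) (r l : Fin n → ℂ)
    (hmom : ∀ k : ℕ, l ⬝ᵥ (F ^ k).mulVec r = 1)
    (X : ℝ → Matrix (Fin N) (Fin N) ℂ)
    (hX : ∀ (t : ℝ) (a b : Fin N),
      HasDerivAt (fun s => X s a b) ((((-Complex.I) • H t + K t) * X t) a b) t)
    (hX0 : X 0 = 1)
    (Ψ : ℝ → Matrix (Fin n × Fin N) (Fin n × Fin N) ℂ)
    (hΨ : ∀ (t : ℝ) (ia jb : Fin n × Fin N),
      HasDerivAt (fun s => Ψ s ia jb)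
        ((((-Complex.I) • ((1 : Matrix (Fin n) (Fin n) ℂ) ⊗ₖ H t) + F ⊗ₖ K t) * Ψ t) ia jb) t)
    (hΨ0 : Ψ 0 = 1) :
    ∀ t : ℝ, 0 ≤ t → ∀ a b : Fin N,
      ∑ i : Fin n, ∑ j : Fin n, l i * Ψ t (i, a) (j, b) * r j = X t a b := by
  obtain ⟨G, hG⟩ := exists_companion F
  intro t ht a b
  set P : Matrix (Fin n) (Fin n) ℂ := Matrix.of fun k i => (l ᵥ* F ^ (k : ℕ)) i with hP
  set E : Matrix (Fin n) (Fin 1) ℂ := Matrix.of fun _ _ => 1 with hE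
  set R : Matrix (Fin n) (Fin 1) ℂ := Matrix.of fun j _ => r j with hR
  have hPF : P * F = G * P := by
    ext k i
    have h1 : (P * F) k i = (l ᵥ* F ^ ((k : ℕ) + 1)) i := by
      rw [pow_succ, ← Matrix.vecMul_vecMul]; rfl
    rw [h1, hG, Matrix.vecMul_sum, Finset.sum_apply, Matrix.mul_apply]
    simp [hP, Matrix.vecMul_smul]
  have hPR : P * R = E := by
    ext k i
    have h1 : (P * R) k i = (l ᵥ* F ^ (k : ℕ)) ⬝ᵥ r := rfl
    rw [h1, ← Matrix.dotProduct_mulVec, hmom]; rfl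
  have hGE : G * E = E := by
    ext k i
    have h1 : P * F * R = G * E := by rw [hPF, Matrix.mul_assoc, hPR]
    rw [← h1]
    have h2 : (P * F * R) k i = (l ᵥ* F ^ (k : ℕ) ᵥ* F) ⬝ᵥ r := rfl
    rw [h2, Matrix.vecMul_vecMul, ← pow_succ, ← Matrix.dotProduct_mulVec, hmom]; rfl
  set A : ℝ → Matrix (Fin n × Fin N) (Fin n × Fin N) ℂ := fun t =>
    (-Complex.I) • ((1 : Matrix (Fin n) (Fin n) ℂ) ⊗ₖ H t) + G ⊗ₖ K t with hAdef
  have hA : Continuous A := by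
    refine continuous_matrix fun i j => ?_
    simp only [hAdef, Matrix.add_apply, Matrix.smul_apply, Matrix.kroneckerMap_apply]
    have := hHcont.matrix_elem i.2 j.2
    have := hKcont.matrix_elem i.2 j.2
    fun_prop
  set L : Matrix (Fin n × Fin N) (Fin n × Fin N) ℂ := P ⊗ₖ (1 : Matrix (Fin N) (Fin N) ℂ) with hL
  set Q : Matrix (Fin n × Fin N) (Fin 1 × Fin N) ℂ := R ⊗ₖ (1 : Matrix (Fin N) (Fin N) ℂ) with hQ
  set D : ℝ → Matrix (Fin n × Fin N) (Fin 1 × Fin N) ℂ := fun s => L * Ψ s * Q - E ⊗ₖ X s with hD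
  have hLA : ∀ s, L * ((-Complex.I) • ((1 : Matrix (Fin n) (Fin n) ℂ) ⊗ₖ H s) + F ⊗ₖ K s)
      = A s * L := by
    intro s
    simp only [hL, hAdef, Matrix.mul_add, Matrix.add_mul, Matrix.mul_smul, Matrix.smul_mul,
      ← Matrix.mul_kronecker_mul, hPF, Matrix.one_mul, Matrix.mul_one]
  have hAE : ∀ s, A s * (E ⊗ₖ X s) = E ⊗ₖ (((-Complex.I) • H s + K s) * X s) := by
    intro s
    simp only [hAdef, Matrix.add_mul, Matrix.smul_mul, ← Matrix.mul_kronecker_mul, hGE,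
      Matrix.one_mul, Matrix.kronecker_add, Matrix.kronecker_smul]
  have hder : ∀ s i j, HasDerivAt (fun s => D s i j) ((A s * D s) i j) s := by
    intro s i j
    have e : A s * D s = L * (((-Complex.I) • ((1 : Matrix (Fin n) (Fin n) ℂ) ⊗ₖ H s)
        + F ⊗ₖ K s) * Ψ s) * Q - E ⊗ₖ (((-Complex.I) • H s + K s) * X s) := by
      rw [← hAE, ← Matrix.mul_assoc L, hLA]
      simp only [hD, Matrix.mul_sub, Matrix.mul_assoc]
    rw [e]
    exact (entry_deriv L Q Ψ _ s (hΨ s) i j).sub ((hX s i.2 j.2).const_mul (E i.1 j.1))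
  have hD0 : D 0 = 0 := by
    simp only [hD, hΨ0, hX0, hL, hQ, Matrix.mul_one, ← Matrix.mul_kronecker_mul, hPR, sub_self]
  have hz := lin_unique A hA (fun s i => D s i (0, b)) (fun s i => hder s i (0, b))
    (by ext i; simp [hD0]) t ht
  have hz1 := congrFun hz (⟨0, hn⟩, a)
  have h3 : (L * Ψ t * Q) (⟨0, hn⟩, a) (0, b) = X t a b := by
    have := sub_eq_zero.1 hz1
    rw [this]
    simp [hE, Matrix.kroneckerMap_apply]
  rw [← h3]
  simp [Matrix.mul_apply, hL, hQ, hP, hR, Fintype.sum_prod_type, Matrix.one_apply,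
    Finset.sum_mul]
  rw [Finset.sum_comm]
end

section
/- Let $\mathcal{H}$ be a complex Hilbert space, and let $F : \mathcal{H} \to \mathcal{H}$ be a bounded linear operator that is skew-adjoint, i.e., $F^{\dagger} = -F$. Then there do not exist vectors $l, r \in \mathcal{H}$ such that $\langle l, F^k r \rangle = 1$ for every integer $k \ge 0$. In other words, the moment conditions can never be fulfilled with a skew-Hermitian generator and both the encoding vector and the evaluation vector lying inside the Hilbert space. -/
/-- **Moment conditions cannot be fulfilled inside the Hilbert space.**
If `F` is a bounded skew-adjoint operator on a complex Hilbert space, then there are no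
vectors `l, r` in the Hilbert space with `⟪l, F^k r⟫ = 1` for all integers `k ≥ 0`. -/
theorem no_moment_fulfilling_pair_in_hilbert_space
    {H : Type*} [NormedAddCommGroup H] [InnerProductSpace ℂ H] [CompleteSpace H]
    (F : H →L[ℂ] H) (hF : ContinuousLinearMap.adjoint F = -F) :
    ¬ ∃ l r : H, ∀ k : ℕ, (inner ℂ l ((F ^ k) r) : ℂ) = 1 := by
  rintro ⟨l, r, h⟩
  let S : Submodule ℂ H := Submodule.span ℂ (Set.range fun k : ℕ => (F ^ k) r)
  let K : Submodule ℂ H := S.topologicalClosure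
  have hKc : IsClosed (K : Set H) := S.isClosed_topologicalClosure
  haveI : CompleteSpace K := hKc.completeSpace_coe
  have hinvS : ∀ x ∈ S, F x ∈ S := by
    intro x hx
    induction hx using Submodule.span_induction with
    | mem x hx =>
      obtain ⟨k, rfl⟩ := hx
      exact Submodule.subset_span ⟨k + 1, by simp [pow_succ']⟩
    | zero => simp
    | add x y _ _ hx hy => rw [map_add]; exact S.add_mem hx hy
    | smul c x _ hx => rw [map_smul]; exact S.smul_mem c hx
  have heqS : ∀ x ∈ S, (inner ℂ l (F x) : ℂ) = inner ℂ l x := by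
    intro x hx
    induction hx using Submodule.span_induction with
    | mem x hx =>
      obtain ⟨k, rfl⟩ := hx
      have := h (k + 1)
      rw [pow_succ'] at this
      exact this.trans (h k).symm
    | zero => simp
    | add x y _ _ hx hy => rw [map_add, inner_add_right, inner_add_right, hx, hy]
    | smul c x _ hx => rw [map_smul, inner_smul_right, inner_smul_right, hx]
  have hinv : ∀ x ∈ K, F x ∈ K := by
    intro x hx
    exact map_mem_closure F.continuous hx hinvS
  have heq : ∀ x ∈ K, (inner ℂ l (F x) : ℂ) = inner ℂ l x := by
    intro x hx
    have hcl : IsClosed {x : H | (inner ℂ l (F x) : ℂ) = inner ℂ l x} :=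
      isClosed_eq (by fun_prop) (by fun_prop)
    exact closure_minimal (s := (S : Set H)) heqS hcl hx
  let p : H := K.starProjection l
  have hpK : p ∈ K := K.starProjection_apply_mem l
  have hp : ∀ x ∈ K, (inner ℂ p x : ℂ) = inner ℂ l x := by
    intro x hx
    have := Submodule.starProjection_inner_eq_zero l x hx
    rw [inner_sub_left, sub_eq_zero] at this
    exact this.symm
  have h1 : (inner ℂ p (F p) : ℂ) = inner ℂ p p := by
    rw [hp _ (hinv p hpK), heq p hpK, hp p hpK]
  have h2 : (inner ℂ p (F p) : ℂ) = - inner ℂ (F p) p := by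
    rw [← ContinuousLinearMap.adjoint_inner_left, hF]
    simp
  have h3 : (inner ℂ (F p) p : ℂ) = inner ℂ p p := by
    rw [← inner_conj_symm, h1, inner_conj_symm]
  have h4 : (inner ℂ p p : ℂ) = 0 := by
    rw [h3, h1] at h2
    exact self_eq_neg.mp h2
  have h5 : p = 0 := inner_self_eq_zero.mp h4
  have hr : r ∈ K := S.le_topologicalClosure (Submodule.subset_span ⟨0, by simp⟩)
  have h6 := hp r hr
  have h7 := h 0
  rw [h5] at h6
  simp at h6 h7
  rw [h7] at h6
  exact zero_ne_one h6
end

section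
/- Let $M \ge 2$, $h = 1/M$, $p_j = j h$, and let $F_h$ be the $(M+1) \times (M+1)$ real matrix acting on vectors $v = (v_0, \dots, v_M)$ by $(F_h v)_0 = \tfrac{1}{2\sqrt{2}} v_1$, $(F_h v)_1 = \tfrac{3}{4} v_2 - \tfrac{1}{4\sqrt{2}} v_0$, $(F_h v)_i = \tfrac{p_{i+1} + p_i}{4h} v_{i+1} - \tfrac{p_i + p_{i-1}}{4h} v_{i-1}$ for $2 \le i \le M - 1$, and $(F_h v)_M = 0$. Let $W = \mathrm{diag}(\tfrac{1}{2}, 1, \dots, 1, \tfrac{1}{2})$. Then for all vectors $u, v \in \mathbb{C}^{M+1}$ with $u_M = v_M = 0$, one has $\langle u, F_h v \rangle_W + \langle F_h u, v \rangle_W = 0$, where $\langle u, v \rangle_W = \sum_{j=0}^{M} W_{jj}\, \overline{u_j}\, v_j$; that is, $F_h$ is skew-Hermitian in the trapezoidal-weighted inner product on grid vectors satisfying the zero boundary condition at $p = 1$. -/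
/-- The second-order summation-by-parts finite-difference approximation `F_h` of the
operator `F = p ∂_p + 1/2` on the uniform grid `p_j = j h`, `h = 1/M`, of `[0,1]`. -/
noncomputable def FhMat (M : ℕ) : Matrix (Fin (M + 1)) (Fin (M + 1)) ℝ :=
  fun i j =>
    let h : ℝ := 1 / M
    let p : ℕ → ℝ := fun k => k * h
    if (i : ℕ) = 0 then (if (j : ℕ) = 1 then 1 / (2 * Real.sqrt 2) else 0)
    else if (i : ℕ) = 1 then
      (if (j : ℕ) = 2 then 3 / 4 else if (j : ℕ) = 0 then -(1 / (4 * Real.sqrt 2)) else 0)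
    else if (i : ℕ) = M then 0
    else if (j : ℕ) = (i : ℕ) + 1 then (p ((i : ℕ) + 1) + p (i : ℕ)) / (4 * h)
    else if (j : ℕ) + 1 = (i : ℕ) then -((p (i : ℕ) + p ((i : ℕ) - 1)) / (4 * h))
    else 0

theorem FhMat_key (M : ℕ) (hM : 2 ≤ M) (i j : Fin (M + 1)) (hi : (i : ℕ) ≠ M) (hj : (j : ℕ) ≠ M) :
    (if (i : ℕ) = 0 ∨ (i : ℕ) = M then (1 : ℝ) / 2 else 1) * FhMat M i j
      + (if (j : ℕ) = 0 ∨ (j : ℕ) = M then (1 : ℝ) / 2 else 1) * FhMat M j i = 0 := by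
  have hM0 : (M : ℝ) ≠ 0 := by
    have : M ≠ 0 := by omega
    exact_mod_cast this
  have hs : Real.sqrt 2 ≠ 0 := by positivity
  obtain ⟨i, hi'⟩ := i
  obtain ⟨j, hj'⟩ := j
  simp only at hi hj
  wlog hij : i ≤ j generalizing i j
  · rw [add_comm]
    exact this j hj' hj i hi' hi (by omega)
  unfold FhMat
  simp only [hi, hj, or_false, if_false]
  by_cases h1 : j = i + 1
  · subst h1
    rcases i with _ | _ | i
    · simp
      field_simp
      norm_num
    · simp
      field_simp
      norm_num
    · simp
  · have e1 : ¬ (i = j + 1) := by omega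
    have e2 : ¬ (j + 1 = i) := by omega
    have e3 : ¬ (i + 1 = j) := by omega
    rcases i with _ | _ | i <;> rcases j with _ | _ | j <;> simp_all <;> omega

/-- **Discrete skew-Hermiticity of `F_h` in the trapezoidal-weighted inner product.**
For grid vectors `u, v` vanishing at the right boundary node,
`⟨u, F_h v⟩_W + ⟨F_h u, v⟩_W = 0` with `W = diag(1/2, 1, …, 1, 1/2)`. -/
theorem Fh_skew_hermitian_weighted
    (M : ℕ) (hM : 2 ≤ M)
    (W : Fin (M + 1) → ℝ)
    (hW : W = fun j : Fin (M + 1) => if (j : ℕ) = 0 ∨ (j : ℕ) = M then (1 : ℝ) / 2 else 1)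
    (u v : Fin (M + 1) → ℂ)
    (hu : u (Fin.last M) = 0) (hv : v (Fin.last M) = 0) :
    (∑ j : Fin (M + 1), (W j : ℂ) * (starRingEnd ℂ) (u j) *
        (((FhMat M).map (fun x : ℝ => (x : ℂ))).mulVec v j))
      + ∑ j : Fin (M + 1), (W j : ℂ) *
          (starRingEnd ℂ) (((FhMat M).map (fun x : ℝ => (x : ℂ))).mulVec u j) * v j
      = 0 := by
  have hk : ∀ i j : Fin (M + 1),
      (starRingEnd ℂ) (u i) * v j * ((W i * FhMat M i j + W j * FhMat M j i : ℝ) : ℂ) = 0 := by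
    intro i j
    by_cases hi : (i : ℕ) = M
    · have : i = Fin.last M := Fin.ext hi
      rw [this, hu]; simp
    by_cases hj : (j : ℕ) = M
    · have : j = Fin.last M := Fin.ext hj
      rw [this, hv]; simp
    have := FhMat_key M hM i j hi hj
    rw [hW]
    simp only [this]
    simp
  simp only [Matrix.mulVec, dotProduct, Matrix.map_apply, map_sum, map_mul, Complex.conj_ofReal,
    Finset.mul_sum, Finset.sum_mul]
  rw [add_comm, Finset.sum_comm, ← Finset.sum_add_distrib]
  refine Finset.sum_eq_zero fun i _ => ?_
  rw [← Finset.sum_add_distrib]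
  refine Finset.sum_eq_zero fun j _ => ?_
  rw [← hk i j]
  push_cast
  ring
end

section
/- Let $M$ be a positive integer divisible by $4$, $h = 1/M$, $p_j = j h$, and let $F_h$ be the $(M+1) \times (M+1)$ matrix with $(F_h v)_0 = \tfrac{1}{2\sqrt{2}} v_1$, $(F_h v)_1 = \tfrac{3}{4} v_2 - \tfrac{1}{4\sqrt{2}} v_0$, $(F_h v)_i = \tfrac{p_{i+1}+p_i}{4h} v_{i+1} - \tfrac{p_i+p_{i-1}}{4h} v_{i-1}$ for $2 \le i \le M-1$, $(F_h v)_M = 0$. Let $\theta > 0$, $T > 0$, $K_{\max} > 0$ with $\theta K_{\max} T < \tfrac{1}{4e}$, and let $\kappa : \mathbb{R} \to \mathbb{R}$ be continuous with $0 \le \kappa(t) \le K_{\max}$ for all $t \in [0, T]$. Suppose $u : \mathbb{R} \to \mathbb{C}^{M+1}$ solves $u'(t) = -\theta \kappa(t)\, F_h u(t)$ with initial data $u(0) = u^R$ satisfying $u^R_j = 0$ for all $j$ with $p_j \le \tfrac{3}{4}$. Then for every $t \in [0, T]$ and every index $i$ with $p_i \le \tfrac{1}{2}$, $|u_i(t)|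 \le \dfrac{(4 e \theta t K_{\max})^{M/4}}{1 - 4 e \theta t K_{\max}}\, \|u^R\|_2$. -/
lemma Fh_entry (M : ℕ) (hM : 4 ≤ M) (i j : Fin (M + 1)) :
    |FhMat M i j| ≤ (if (j : ℕ) = (i : ℕ) + 1 then ((i : ℕ) + 1 : ℝ) / 2 else 0)
      + (if (j : ℕ) + 1 = (i : ℕ) then ((i : ℕ) : ℝ) / 2 else 0) := by
  have hMp : (0 : ℝ) < M := by
    have : 0 < M := by omega
    exact_mod_cast this
  have hs : (1 : ℝ) ≤ Real.sqrt 2 := by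
    rw [Real.one_le_sqrt]; norm_num
  have h1 : 1 / (2 * Real.sqrt 2) ≤ 1 / 2 := by
    apply one_div_le_one_div_of_le <;> linarith
  have h2 : 1 / (4 * Real.sqrt 2) ≤ 1 / 4 := by
    apply one_div_le_one_div_of_le <;> linarith
  have h1' : 0 ≤ 1 / (2 * Real.sqrt 2) := by positivity
  have h2' : 0 ≤ 1 / (4 * Real.sqrt 2) := by positivity
  have key : ∀ a b : ℝ, (a * (1 / (M : ℝ)) + b * (1 / (M : ℝ))) / (4 * (1 / (M : ℝ)))
      = (a + b) / 4 := by
    intro a b; field_simp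
  have hi0 : (0 : ℝ) ≤ ((i : ℕ) : ℝ) := Nat.cast_nonneg _
  have hR : 0 ≤ (if (j : ℕ) = (i : ℕ) + 1 then ((i : ℕ) + 1 : ℝ) / 2 else 0)
      + (if (j : ℕ) + 1 = (i : ℕ) then ((i : ℕ) : ℝ) / 2 else 0) := by
    apply add_nonneg <;> split_ifs <;> positivity
  unfold FhMat
  simp only [key]
  by_cases c0 : (i : ℕ) = 0
  · by_cases d : (j : ℕ) = 1
    · simp only [c0, d, if_true]
      rw [abs_of_nonneg h1']; norm_num at h1 ⊢; linarith
    · simpa [c0, d] using hR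
  by_cases c1 : (i : ℕ) = 1
  · by_cases d : (j : ℕ) = 2
    · simp [c1, d]; rw [abs_of_nonneg] <;> norm_num
    · by_cases d0 : (j : ℕ) = 0
      · simp only [c1, d0]
        norm_num at h2 h2' ⊢
        rw [abs_of_nonneg (by positivity)]; linarith
      · rw [if_neg c0, if_pos c1, if_neg d, if_neg d0, abs_zero]; exact hR
  rw [if_neg c0, if_neg c1]
  by_cases cM : (i : ℕ) = M
  · rw [if_pos cM, abs_zero]; exact hR
  rw [if_neg cM]
  by_cases d : (j : ℕ) = (i : ℕ) + 1
  · have : ¬ ((j : ℕ) + 1 = (i : ℕ)) := by omega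
    rw [if_pos d, if_pos d, if_neg this, abs_of_nonneg (by positivity)]
    push_cast; linarith
  by_cases d' : (j : ℕ) + 1 = (i : ℕ)
  · rw [if_neg d, if_neg d, if_pos d', if_pos d', abs_neg, abs_of_nonneg (by positivity)]
    have : (((i : ℕ) - 1 : ℕ) : ℝ) ≤ (i : ℕ) := by exact_mod_cast Nat.sub_le _ _
    linarith
  rw [if_neg d, if_neg d']; simp [d, d']

lemma Fh_row (M : ℕ) (hM : 4 ≤ M) (i : Fin (M + 1)) :
    ∑ j, |FhMat M i j| ≤ M := by
  refine (Finset.sum_le_sum fun j _ => Fh_entry M hM i j).trans ?_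
  rw [Finset.sum_add_distrib]
  have hi0 : (0 : ℝ) ≤ ((i : ℕ) : ℝ) := Nat.cast_nonneg _
  have hB : ∑ j : Fin (M + 1), (if (j : ℕ) + 1 = (i : ℕ) then ((i : ℕ) : ℝ) / 2 else 0)
      ≤ ((i : ℕ) : ℝ) / 2 := by
    rw [← Finset.sum_filter, Finset.sum_const, nsmul_eq_mul]
    have : (Finset.univ.filter fun j : Fin (M + 1) => (j : ℕ) + 1 = (i : ℕ)).card ≤ 1 := by
      rw [Finset.card_le_one]
      intro a ha b hb
      simp at ha hb
      ext; omega
    have : (((Finset.univ.filter fun j : Fin (M + 1) => (j : ℕ) + 1 = (i : ℕ)).card : ℕ) : ℝ)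
        ≤ 1 := by exact_mod_cast this
    nlinarith
  by_cases cM : (i : ℕ) = M
  · have hA : ∑ j : Fin (M + 1), (if (j : ℕ) = (i : ℕ) + 1 then ((i : ℕ) + 1 : ℝ) / 2 else 0)
        = 0 := by
      apply Finset.sum_eq_zero
      intro j _
      rw [if_neg]; omega
    rw [hA]
    have : ((i : ℕ) : ℝ) = M := by exact_mod_cast cM
    linarith
  · have hA : ∑ j : Fin (M + 1), (if (j : ℕ) = (i : ℕ) + 1 then ((i : ℕ) + 1 : ℝ) / 2 else 0)
        ≤ ((i : ℕ) + 1 : ℝ) / 2 := by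
      rw [← Finset.sum_filter, Finset.sum_const, nsmul_eq_mul]
      have : (Finset.univ.filter fun j : Fin (M + 1) => (j : ℕ) = (i : ℕ) + 1).card ≤ 1 := by
        rw [Finset.card_le_one]
        intro a ha b hb
        simp at ha hb
        ext; omega
      have : (((Finset.univ.filter fun j : Fin (M + 1) => (j : ℕ) = (i : ℕ) + 1).card : ℕ) : ℝ)
          ≤ 1 := by exact_mod_cast this
      nlinarith
    have : ((i : ℕ) : ℝ) + 1 ≤ M := by
      have : (i : ℕ) + 1 ≤ M := by omega
      exact_mod_cast this
    linarith

lemma Fh_zero (M : ℕ) (hM : 4 ≤ M) (i j : Fin (M + 1)) (h : ¬ (j : ℕ) ≤ (i : ℕ) + 1) :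
    FhMat M i j = 0 := by
  have := Fh_entry M hM i j
  rw [if_neg (by omega), if_neg (by omega)] at this
  simpa using this

/-- **Finite propagation speed of the semi-discrete dilation scheme.**
If `θ K_max T < 1/(4e)` and the initial data vanishes on the nodes `p_j ≤ 3/4`, then
for `t ∈ [0,T]` the solution of `u' = -θ κ(t) F_h u` remains small on the nodes
`p_i ≤ 1/2`, bounded by `(4eθtK_max)^{M/4} / (1 - 4eθtK_max) · ‖u(0)‖₂`. -/
theorem Fh_finite_propagation_speed
    (M : ℕ) (hM : 0 < M) (hM4 : 4 ∣ M)
    (θ T Kmax : ℝ) (hθ : 0 < θ) (hT : 0 < T) (hKmax : 0 < Kmax)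
    (hCFL : θ * Kmax * T < 1 / (4 * Real.exp 1))
    (κ : ℝ → ℝ) (hκc : Continuous κ)
    (hκ : ∀ t ∈ Set.Icc (0 : ℝ) T, 0 ≤ κ t ∧ κ t ≤ Kmax)
    (u : ℝ → Fin (M + 1) → ℂ)
    (hu : ∀ (t : ℝ) (j : Fin (M + 1)),
      HasDerivAt (fun s => u s j)
        (((-(θ * κ t) : ℝ) : ℂ) *
          (((FhMat M).map (fun x : ℝ => (x : ℂ))).mulVec (u t) j)) t)
    (hu0 : ∀ j : Fin (M + 1), ((j : ℕ) : ℝ) / M ≤ 3 / 4 → u 0 j = 0) :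
    ∀ t ∈ Set.Icc (0 : ℝ) T, ∀ i : Fin (M + 1), ((i : ℕ) : ℝ) / M ≤ 1 / 2 →
      ‖u t i‖ ≤ (4 * Real.exp 1 * θ * t * Kmax) ^ (M / 4)
          / (1 - 4 * Real.exp 1 * θ * t * Kmax)
          * Real.sqrt (∑ j : Fin (M + 1), ‖u 0 j‖ ^ 2) := by
  intro t ht i hi
  obtain ⟨m, rfl⟩ := hM4
  have hm : 1 ≤ m := by omega
  have hM4' : 4 ≤ 4 * m := by omega
  have hmR : (0 : ℝ) < m := by exact_mod_cast hm
  have hdiv : ∀ j : Fin (4 * m + 1), (j : ℕ) ≤ 3 * m → u 0 j = 0 := by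
    intro j hj
    apply hu0
    have : ((j : ℕ) : ℝ) ≤ 3 * m := by exact_mod_cast hj
    push_cast
    rw [div_le_iff₀ (by positivity)]; linarith
  have hi2 : (i : ℕ) ≤ 2 * m := by
    push_cast at hi
    rw [div_le_iff₀ (by positivity)] at hi
    have : ((i : ℕ) : ℝ) ≤ 2 * m := by linarith
    exact_mod_cast this
  have he : 0 < Real.exp 1 := Real.exp_pos 1
  have he1 : 1 ≤ Real.exp 1 := Real.one_le_exp zero_le_one
  have hx1 : 4 * Real.exp 1 * θ * t * Kmax < 1 := by
    have h1 : θ * Kmax * t ≤ θ * Kmax * T := by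
      have := ht.2
      gcongr
    have h2 := h1.trans_lt hCFL
    rw [lt_div_iff₀ (by positivity)] at h2
    linarith
  have hx0 : 0 ≤ 4 * Real.exp 1 * θ * t * Kmax := by
    have := ht.1
    positivity
  set N := Real.sqrt (∑ j : Fin (4 * m + 1), ‖u 0 j‖ ^ 2) with hN
  have hN0 : 0 ≤ N := Real.sqrt_nonneg _
  have hNj : ∀ j, ‖u 0 j‖ ≤ N := by
    intro j
    apply Real.le_sqrt_of_sq_le
    exact Finset.single_le_sum (f := fun j => ‖u 0 j‖ ^ 2) (fun _ _ => by positivity)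
      (Finset.mem_univ j)
  rcases ht.1.eq_or_lt with h0 | ht0
  · subst h0
    rw [hdiv i (by omega), norm_zero]
    apply mul_nonneg (div_nonneg (pow_nonneg hx0 _) (by linarith)) hN0
  have hdm : 4 * m / 4 = m := by omega
  rw [hdm]
  set y := 4 * θ * t * Kmax with hy
  have hy0 : 0 < y := by positivity
  have hxy : 4 * Real.exp 1 * θ * t * Kmax = Real.exp 1 * y := by rw [hy]; ring
  rw [hxy] at hx1 hx0 ⊢
  have hy1 : y ≤ 1 := by nlinarith
  set ρ := 1 / y with hρ
  have hρ0 : 0 < ρ := by positivity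
  have hρ1 : 1 ≤ ρ := by rw [hρ, le_div_iff₀ hy0]; linarith
  set a : Fin (4 * m + 1) → ℝ := fun j => ρ ^ (3 * m - (j : ℕ)) with ha
  have ha0 : ∀ j, 0 < a j := fun j => pow_pos hρ0 _
  have haij : ∀ i j : Fin (4 * m + 1), (j : ℕ) ≤ (i : ℕ) + 1 → a i ≤ ρ * a j := by
    intro i j hij
    simp only [ha]
    rw [← pow_succ']
    exact pow_le_pow_right₀ hρ1 (by omega)
  set v : ℝ → Fin (4 * m + 1) → ℂ := fun s j => (a j : ℂ) * u s j with hv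
  have hvn : ∀ s j, ‖v s j‖ = a j * ‖u s j‖ := by
    intro s j
    simp only [hv, norm_mul, Complex.norm_real, Real.norm_eq_abs, abs_of_pos (ha0 j)]
  set v' : ℝ → Fin (4 * m + 1) → ℂ := fun s j => (a j : ℂ) *
    (((-(θ * κ s) : ℝ) : ℂ) *
          (((FhMat (4 * m)).map (fun x : ℝ => (x : ℂ))).mulVec (u s) j)) with hv'
  have hder : ∀ s, HasDerivAt v (v' s) s := by
    intro s
    rw [hasDerivAt_pi]
    intro j
    exact (hu s j).const_mul _
  have hbound : ∀ s ∈ Set.Ico (0 : ℝ) t,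
      ‖v' s‖ ≤ (θ * Kmax * (4 * m) * ρ) * ‖v s‖ + 0 := by
    intro s hs
    rw [add_zero]
    obtain ⟨k0, k1⟩ := hκ s ⟨hs.1, hs.2.le.trans ht.2⟩
    rw [pi_norm_le_iff_of_nonneg (by positivity)]
    intro j
    have hmv : a j * ‖((FhMat (4 * m)).map (fun x : ℝ => (x : ℂ))).mulVec (u s) j‖
        ≤ (4 * m) * ρ * ‖v s‖ := by
      calc a j * ‖((FhMat (4 * m)).map (fun x : ℝ => (x : ℂ))).mulVec (u s) j‖
          ≤ a j * ∑ l, |FhMat (4 * m) j l| * ‖u s l‖ := by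
            apply mul_le_mul_of_nonneg_left _ (ha0 j).le
            · unfold Matrix.mulVec dotProduct
              refine (norm_sum_le _ _).trans (le_of_eq ?_)
              apply Finset.sum_congr rfl
              intro l _
              simp
        _ = ∑ l, |FhMat (4 * m) j l| * (a j * ‖u s l‖) := by
            rw [Finset.mul_sum]
            apply Finset.sum_congr rfl
            intro l _
            ring
        _ ≤ ∑ l, |FhMat (4 * m) j l| * (ρ * ‖v s‖) := by
            apply Finset.sum_le_sum
            intro l _
            by_cases hl : (l : ℕ) ≤ (j : ℕ) + 1
            · apply mul_le_mul_of_nonneg_left _ (abs_nonneg _)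
              calc a j * ‖u s l‖ ≤ ρ * a l * ‖u s l‖ := by
                    apply mul_le_mul_of_nonneg_right (haij j l hl) (norm_nonneg _)
                _ = ρ * ‖v s l‖ := by rw [hvn]; ring
                _ ≤ ρ * ‖v s‖ := by
                    apply mul_le_mul_of_nonneg_left (norm_le_pi_norm _ _) hρ0.le
            · rw [Fh_zero _ hM4' j l hl]; simp
        _ = (∑ l, |FhMat (4 * m) j l|) * (ρ * ‖v s‖) := by rw [Finset.sum_mul]
        _ ≤ (4 * m) * (ρ * ‖v s‖) := by
            have := Fh_row _ hM4' j
            push_cast at this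
            apply mul_le_mul_of_nonneg_right this (by positivity)
        _ = _ := by ring
    have e1 : ‖v' s j‖ = (θ * κ s) *
        (a j * ‖((FhMat (4 * m)).map (fun x : ℝ => (x : ℂ))).mulVec (u s) j‖) := by
      simp only [hv', norm_mul, Complex.norm_real, Real.norm_eq_abs, abs_of_pos (ha0 j), abs_neg,
        abs_of_nonneg (mul_nonneg hθ.le k0)]
      ring
    rw [e1]
    calc _ ≤ (θ * Kmax) * ((4 * m) * ρ * ‖v s‖) := by
          apply mul_le_mul _ hmv _ (by positivity)
          · exact mul_le_mul_of_nonneg_left k1 hθ.le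
          · exact mul_nonneg (ha0 j).le (norm_nonneg _)
      _ = _ := by ring
  have hinit : ‖v 0‖ ≤ N := by
    rw [pi_norm_le_iff_of_nonneg hN0]
    intro j
    rw [hvn]
    by_cases hj : (j : ℕ) ≤ 3 * m
    · rw [hdiv j hj]; simpa using hN0
    · have : a j = 1 := by
        simp only [ha]
        rw [show 3 * m - (j : ℕ) = 0 by omega, pow_zero]
      rw [this, one_mul]; exact hNj j
  have hG := norm_le_gronwallBound_of_norm_deriv_right_le
    (fun s _ => (hder s).continuousAt.continuousWithinAt)
    (fun s _ => (hder s).hasDerivWithinAt) hinit hbound t ⟨ht0.le, le_rfl⟩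
  rw [gronwallBound_ε0, sub_zero] at hG
  have hexp : θ * Kmax * (4 * m) * ρ * t = m * 1 := by
    rw [hρ, hy]; field_simp
  rw [hexp, Real.exp_nat_mul] at hG
  have h3 : ρ ^ m * ‖u t i‖ ≤ N * Real.exp 1 ^ m := by
    calc ρ ^ m * ‖u t i‖ ≤ a i * ‖u t i‖ := by
          apply mul_le_mul_of_nonneg_right _ (norm_nonneg _)
          exact pow_le_pow_right₀ hρ1 (by omega)
      _ = ‖v t i‖ := (hvn t i).symm
      _ ≤ ‖v t‖ := norm_le_pi_norm _ _
      _ ≤ _ := hG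
  have h4 : ‖u t i‖ ≤ (Real.exp 1 * y) ^ m * N := by
    have : ‖u t i‖ = y ^ m * (ρ ^ m * ‖u t i‖) := by
      rw [← mul_assoc, ← mul_pow, hρ, mul_one_div_cancel hy0.ne', one_pow, one_mul]
    rw [this, mul_pow (Real.exp 1) y m]
    calc _ ≤ y ^ m * (N * Real.exp 1 ^ m) := mul_le_mul_of_nonneg_left h3 (by positivity)
      _ = _ := by ring
  refine h4.trans (mul_le_mul_of_nonneg_right ?_ hN0)
  exact le_div_self (pow_nonneg hx0 _) (by linarith) (by linarith)
end

section
/- Let $M \ge 3$, $h = 1/M$, $p_j = j h$, and let $v : \mathbb{R} \to \mathbb{R}$ be three times continuously differentiable on $[0,1]$ with $\sup_{[0,1]} |v''| \le M_2$ and $\sup_{[0,1]} |v'''| \le M_3$. Then for every interior index $2 \le i \le M - 1$, the finite-difference stencil satisfies the local consistency bound $\Big| \tfrac{p_{i+1} + p_i}{4h}\, v(p_{i+1}) - \tfrac{p_i + p_{i-1}}{4h}\, v(p_{i-1}) - \big( p_i\, v'(p_i) + \tfrac{1}{2} v(p_i) \big) \Big| \le h^2 \Big( \tfrac{M_2}{4}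 + \tfrac{M_3}{6} \Big)$. -/
open Set

lemma taylor3_aux (v : ℝ → ℝ) (hv : ContDiffOn ℝ 3 v (Icc 0 1)) (M3 : ℝ)
    (hM3 : ∀ p ∈ Icc (0 : ℝ) 1, |iteratedDerivWithin 3 v (Icc 0 1) p| ≤ M3)
    (a x : ℝ) (ha : a ∈ Ioo (0 : ℝ) 1) (hx : x ∈ Icc (0 : ℝ) 1) (hne : a ≠ x) :
    |v x - v a - (x - a) * derivWithin v (Icc 0 1) a
      - (x - a) ^ 2 / 2 * iteratedDerivWithin 2 v (Icc 0 1) a| ≤ M3 * |x - a| ^ 3 / 6 := by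
  have hsub : uIcc a x ⊆ Icc (0 : ℝ) 1 :=
    Set.ordConnected_Icc.uIcc_subset (Ioo_subset_Icc_self ha) hx
  have hU : UniqueDiffOn ℝ (uIcc a x) :=
    uniqueDiffOn_Icc (by simpa using hne.symm)
  have hU1 : UniqueDiffOn ℝ (Icc (0 : ℝ) 1) := uniqueDiffOn_Icc one_pos
  have hat : ∀ y ∈ Ioo (0 : ℝ) 1, ContDiffAt ℝ 3 v y := fun y hy =>
    hv.contDiffAt (Icc_mem_nhds hy.1 hy.2)
  have key : ∀ k : ℕ, k ≤ 3 → ∀ y ∈ Ioo (0 : ℝ) 1, y ∈ uIcc a x →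
      iteratedDerivWithin k v (uIcc a x) y = iteratedDerivWithin k v (Icc 0 1) y := by
    intro k hk y hy hy'
    have hc : ContDiffAt ℝ k v y := (hat y hy).of_le (by exact_mod_cast hk)
    rw [iteratedDerivWithin_eq_iteratedDeriv hU hc hy',
      iteratedDerivWithin_eq_iteratedDeriv hU1 hc (Ioo_subset_Icc_self hy)]
  have hvs : ContDiffOn ℝ 3 v (uIcc a x) := hv.mono hsub
  have hd : DifferentiableOn ℝ (iteratedDerivWithin 2 v (uIcc a x)) (uIcc a x) :=
    hvs.differentiableOn_iteratedDerivWithin (by norm_cast) hU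
  obtain ⟨y, hy, he⟩ := taylor_mean_remainder_lagrange (n := 2) hne
    (hvs.of_le (by norm_cast)) (hd.mono uIoo_subset_uIcc_self)
  have hy0 : y ∈ uIcc a x := uIoo_subset_uIcc_self hy
  have hy1 : y ∈ Ioo (0 : ℝ) 1 := by
    have h1 := hy.1
    have h2 := hy.2
    have := ha.1
    have := ha.2
    have := hx.1
    have := hx.2
    constructor
    · exact lt_of_le_of_lt (le_inf ha.1.le hx.1) h1
    · exact lt_of_lt_of_le h2 (sup_le ha.2.le hx.2)
  rw [taylorWithinEval_succ, taylorWithinEval_succ, taylor_within_zero_eval,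
    key _ (by norm_num) a ha left_mem_uIcc, key _ (by norm_num) a ha left_mem_uIcc,
    key _ (by norm_num) y hy1 hy0] at he
  have he' : v x - v a - (x - a) * derivWithin v (Icc 0 1) a
      - (x - a) ^ 2 / 2 * iteratedDerivWithin 2 v (Icc 0 1) a
      = iteratedDerivWithin 3 v (Icc 0 1) y * (x - a) ^ 3 / 6 := by
    rw [← iteratedDerivWithin_one]
    norm_num [Nat.factorial] at he ⊢
    linarith
  rw [he', abs_div, abs_mul, abs_pow]
  have := hM3 y (Ioo_subset_Icc_self hy1)
  norm_num
  gcongr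



/-- **Local consistency of the interior finite-difference stencil.**
For `v ∈ C³[0,1]` with `|v''| ≤ M₂` and `|v'''| ≤ M₃` on `[0,1]`, the interior stencil of
`F_h` approximates `(Fv)(p_i) = p_i v'(p_i) + v(p_i)/2` with error at most
`h²(M₂/4 + M₃/6)`. -/
theorem Fh_local_consistency
    (M : ℕ) (hM : 3 ≤ M)
    (v : ℝ → ℝ) (hv : ContDiffOn ℝ 3 v (Icc 0 1))
    (M2 M3 : ℝ)
    (hM2 : ∀ p ∈ Icc (0 : ℝ) 1, |iteratedDerivWithin 2 v (Icc 0 1) p| ≤ M2)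
    (hM3 : ∀ p ∈ Icc (0 : ℝ) 1, |iteratedDerivWithin 3 v (Icc 0 1) p| ≤ M3) :
    ∀ i : ℕ, 2 ≤ i → i ≤ M - 1 →
      let h : ℝ := 1 / M
      let p : ℕ → ℝ := fun k => k * h
      |((p (i + 1) + p i) / (4 * h)) * v (p (i + 1))
          - ((p i + p (i - 1)) / (4 * h)) * v (p (i - 1))
          - (p i * derivWithin v (Icc 0 1) (p i) + (1 / 2) * v (p i))|
        ≤ h ^ 2 * (M2 / 4 + M3 / 6) := by
  intro i hi hiM h p
  have hMpos : (0 : ℝ) < M := by exact_mod_cast (by omega : 0 < M)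
  have hh : 0 < h := by positivity
  have hMh : (M : ℝ) * h = 1 := by simp only [h]; field_simp
  have hi2 : (2 : ℝ) ≤ i := by exact_mod_cast hi
  have hi1 : (i : ℝ) + 1 ≤ M := by exact_mod_cast (by omega : i + 1 ≤ M)
  have hup : p (i + 1) = p i + h := by simp only [p]; push_cast; ring
  have hdn : p (i - 1) = p i - h := by
    simp only [p]; rw [Nat.cast_sub (by omega)]; push_cast; ring
  have hpi : p i = i * h := rfl
  have e1 : (p (i + 1) + p i) / (4 * h) = (2 * i + 1) / 4 := by
    rw [hup, hpi]; field_simp; ring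
  have e2 : (p i + p (i - 1)) / (4 * h) = (2 * i - 1) / 4 := by
    rw [hdn, hpi]; field_simp; ring
  have b1 : p i + h ≤ 1 := by rw [hpi]; nlinarith
  have b2 : 2 * h ≤ p i := by rw [hpi]; nlinarith
  rw [e1, e2, hup, hdn]
  have ha : p i ∈ Ioo (0 : ℝ) 1 := ⟨by linarith, by linarith⟩
  have t1 := taylor3_aux v hv M3 hM3 (p i) (p i + h) ha ⟨by linarith, b1⟩ (by linarith)
  have t2 := taylor3_aux v hv M3 hM3 (p i) (p i - h) ha ⟨by linarith, by linarith⟩ (by linarith)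
  have t3 := hM2 (p i) (Ioo_subset_Icc_self ha)
  have hM30 : 0 ≤ M3 := (abs_nonneg _).trans (hM3 (p i) (Ioo_subset_Icc_self ha))
  have s1 : p i + h - p i = h := by ring
  have s2 : p i - h - p i = -h := by ring
  rw [s1, abs_of_pos hh] at t1
  rw [s2, abs_neg, abs_of_pos hh] at t2
  set A := v (p i + h)
  set B := v (p i - h)
  set D := derivWithin v (Icc 0 1) (p i)
  set S := iteratedDerivWithin 2 v (Icc 0 1) (p i)
  set R1 := A - v (p i) - h * D - h ^ 2 / 2 * S with hR1
  set R2 := B - v (p i) - -h * D - (-h) ^ 2 / 2 * S with hR2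
  have id1 : (2 * i + 1) / 4 * A - (2 * i - 1) / 4 * B - (p i * D + 1 / 2 * v (p i))
      = h ^ 2 / 4 * S + (2 * i + 1) / 4 * R1 - (2 * i - 1) / 4 * R2 := by
    rw [hR1, hR2]
    have : p i * D = i * h * D := by rw [hpi]
    rw [this]; ring
  rw [id1]
  have c1 : |h ^ 2 / 4 * S| ≤ h ^ 2 / 4 * M2 := by
    rw [abs_mul, abs_of_pos (by positivity)]; gcongr
  have c2 : |(2 * (i : ℝ) + 1) / 4 * R1| ≤ (2 * i + 1) / 4 * (M3 * h ^ 3 / 6) := by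
    rw [abs_mul, abs_of_pos (by positivity)]; gcongr
  have hpos : (0 : ℝ) < (2 * i - 1) / 4 := by linarith
  have c3 : |(2 * (i : ℝ) - 1) / 4 * R2| ≤ (2 * i - 1) / 4 * (M3 * h ^ 3 / 6) := by
    rw [abs_mul, abs_of_pos hpos]; gcongr
  have c4 : p i * (M3 * h ^ 2 / 6) ≤ 1 * (M3 * h ^ 2 / 6) := by
    gcongr; linarith
  rw [hpi] at c4
  calc _ ≤ |h ^ 2 / 4 * S| + |(2 * (i : ℝ) + 1) / 4 * R1| + |(2 * (i : ℝ) - 1) / 4 * R2| :=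
        (abs_sub _ _).trans (by gcongr; exact abs_add_le _ _)
    _ ≤ _ := by nlinarith
end

section
/- For integers $m \ge 1$ and $1 \le s \le m$, the central-difference coefficients $c_s^{(m)} = (-1)^{s+1} \dfrac{\binom{2m}{m+s}}{s \binom{2m}{m}}$ of the $2m$-th order summation-by-parts difference operator satisfy $|c_s^{(m)}| \le \dfrac{m}{m+1}$; equivalently, $(m+1) \binom{2m}{m+s} \le s\, m \binom{2m}{m}$ for all $1 \le s \le m$. -/
theorem cdc_aux (m : ℕ) (s : ℕ) (hs1 : 1 ≤ s) :
    (m + 1) * Nat.choose (2 * m) (m + s) ≤ m * Nat.choose (2 * m) m := by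
  induction s, hs1 using Nat.le_induction with
  | base =>
    have h := Nat.choose_succ_right_eq (2 * m) m
    have e : 2 * m - m = m := by omega
    rw [e] at h
    linarith
  | succ s hs ih =>
    have h := Nat.choose_succ_right_eq (2 * m) (m + s)
    have h2 : Nat.choose (2 * m) (m + s) * (2 * m - (m + s))
        ≤ Nat.choose (2 * m) (m + s) * (m + s + 1) :=
      Nat.mul_le_mul_left _ (by omega)
    rw [← h] at h2
    have h3 := Nat.le_of_mul_le_mul_right h2 (by omega)
    exact (Nat.mul_le_mul_left _ h3).trans ih

/-- **Bound on the central-difference SBP coefficients.**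
For `1 ≤ s ≤ m`, the coefficients `c_s^{(m)} = (-1)^{s+1} C(2m, m+s) / (s C(2m, m))`
satisfy `|c_s^{(m)}| ≤ m/(m+1)`; equivalently
`(m+1) C(2m, m+s) ≤ s m C(2m, m)`. -/
theorem central_difference_coefficient_bound
    (m s : ℕ) (hm : 1 ≤ m) (hs1 : 1 ≤ s) (hsm : s ≤ m) :
    |((-1 : ℝ) ^ (s + 1) * (Nat.choose (2 * m) (m + s) : ℝ)
        / ((s : ℝ) * (Nat.choose (2 * m) m : ℝ)))| ≤ (m : ℝ) / (m + 1) ∧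
    (m + 1) * Nat.choose (2 * m) (m + s) ≤ s * m * Nat.choose (2 * m) m := by
  have key : (m + 1) * Nat.choose (2 * m) (m + s) ≤ s * m * Nat.choose (2 * m) m := by
    refine (cdc_aux m s hs1).trans ?_
    rw [mul_assoc]
    exact Nat.le_mul_of_pos_left _ hs1
  refine ⟨?_, key⟩
  have hs : (0 : ℝ) < s := by exact_mod_cast hs1
  have hc : (0 : ℝ) < (Nat.choose (2 * m) m : ℝ) := by
    exact_mod_cast Nat.choose_pos (by omega)
  have hk : ((m : ℝ) + 1) * (Nat.choose (2 * m) (m + s) : ℝ)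
      ≤ s * m * (Nat.choose (2 * m) m : ℝ) := by exact_mod_cast key
  rw [abs_div, abs_mul, abs_pow, abs_neg, abs_one, one_pow, one_mul, Nat.abs_cast,
    abs_of_pos (mul_pos hs hc), div_le_div_iff₀ (mul_pos hs hc) (by positivity)]
  linarith
end

section
/- Let $n \ge 1$ and let $W$ and $P$ be real diagonal $n \times n$ matrices, $D$ an arbitrary real $n \times n$ matrix, and suppose the summation-by-parts identity $W D + D^{\top} W = B$ holds with $B$ diagonal. Define the split operator $G = \tfrac{1}{2} (P D + D P)$. Then $W G + G^{\top} W = \tfrac{1}{2} (P B + B P)$. In particular, if $P = \mathrm{diag}(p_0, \dots, p_{M})$ with $p_0 = 0$ and $p_M = 1$, and $B = \mathrm{diag}(-1, 0, \dots, 0, 1)$, then $W G + G^{\top} W = \mathrm{diag}(0, 0, \dots, 0, 1)$, so $G$ is skew-Hermitian in the $W$-weighted inner product on vectors vanishing in the last component. -/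
open Matrix

/-- **Skew-Hermiticity of the split SBP discretization of `p ∂_p + 1/2`.**
If `W D + Dᵀ W = B` with `W`, `P`, `B` diagonal, then `G = (PD + DP)/2` satisfies
`W G + Gᵀ W = (PB + BP)/2`; in particular, for `P = diag(p₀,…,p_M)` with `p₀ = 0`,
`p_M = 1` and `B = diag(-1, 0, …, 0, 1)`, one gets `W G + Gᵀ W = diag(0, …, 0, 1)`. -/
theorem sbp_split_operator_skew_hermitian
    (M : ℕ) (hM : 1 ≤ M)
    (w p b : Fin (M + 1) → ℝ)
    (D : Matrix (Fin (M + 1)) (Fin (M + 1)) ℝ)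
    (hSBP : diagonal w * D + Dᵀ * diagonal w = diagonal b)
    (G : Matrix (Fin (M + 1)) (Fin (M + 1)) ℝ)
    (hG : G = (1 / 2 : ℝ) • (diagonal p * D + D * diagonal p)) :
    (diagonal w * G + Gᵀ * diagonal w
        = (1 / 2 : ℝ) • (diagonal p * diagonal b + diagonal b * diagonal p)) ∧
    (p 0 = 0 → p (Fin.last M) = 1 →
      b = (fun j : Fin (M + 1) =>
        if j = 0 then (-1 : ℝ) else if j = Fin.last M then 1 else 0) →
      diagonal w * G + Gᵀ * diagonal w
        = diagonal (fun j : Fin (M + 1) => if j = Fin.last M then (1 : ℝ) else 0)) := by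
  have key : diagonal w * G + Gᵀ * diagonal w
      = (1 / 2 : ℝ) • (diagonal p * diagonal b + diagonal b * diagonal p) := by
    ext i j
    have h := congrFun (congrFun hSBP i) j
    subst hG
    simp only [Matrix.add_apply, diagonal_mul, mul_diagonal, transpose_apply,
      Matrix.smul_apply, smul_eq_mul] at h ⊢
    have e : (diagonal p : Matrix _ _ ℝ) i j * b j = p i * (diagonal b : Matrix _ _ ℝ) i j := by
      by_cases hij : i = j
      · subst hij
        simp
      · simp [hij]
    linear_combination (1 / 2 : ℝ) * (p i + p j) * h - (1 / 2 : ℝ) * e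
  refine ⟨key, fun h0 h1 hb => ?_⟩
  rw [key, diagonal_mul_diagonal, diagonal_mul_diagonal, diagonal_add, ← diagonal_smul]
  congr 1
  funext j
  have hne : Fin.last M ≠ 0 := by
    intro h
    have := congrArg Fin.val h
    simp at this
    omega
  subst hb
  simp only [Pi.smul_apply, smul_eq_mul]
  by_cases hj : j = 0
  · subst hj
    simp [h0, hne.symm]
  · by_cases hl : j = Fin.last M
    · subst hl
      simp [h1, hne]
      norm_num
    · simp [hj, hl]
end
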